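/- Let Q be a hereditary graph class with Q̂ nonempty. Then sup_{W∈Q̂} Ent(W) = 0 if and only if Q is random-free, and sup_{W∈Q̂} Ent(W) = 1 if and only if Q_n is the set of all simple graphs on {1,…,n} for every n ≥ 1. -/

import Mathlib

open MeasureTheory Set Filter

noncomputable section

/-- A graphon: a symmetric measurable function `ℝ → ℝ → ℝ` with values in `[0,1]`
(only its values on `[0,1]²` matter). -/
def IsGraphon (W : ℝ → ℝ → ℝ) : Prop :=
  (∀ x y, W x y = W y x) ∧ Measurable (Function.uncurry W) ∧
    ∀ x y, W x y ∈ Set.Icc (0 : ℝ) 1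

/-- The cut norm `‖U‖_□`, the supremum over measurable `S, T ⊆ [0,1]` of
`|∫_{S×T} U|`. -/
def cutNorm (U : ℝ → ℝ → ℝ) : ℝ :=
  sSup { r : ℝ | ∃ S T : Set ℝ, MeasurableSet S ∧ MeasurableSet T ∧
    S ⊆ Set.Icc 0 1 ∧ T ⊆ Set.Icc 0 1 ∧
    r = |∫ p in S ×ˢ T, U p.1 p.2| }

/-- `d_□(W₁, W₂) = ‖W₁ - W₂‖_□`. -/
def dCut (W₁ W₂ : ℝ → ℝ → ℝ) : ℝ := cutNorm (fun x y => W₁ x y - W₂ x y)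

/-- A Lebesgue-measure-preserving map `[0,1] → [0,1]`. -/
def IsMPSelf (σ : ℝ → ℝ) : Prop :=
  MeasureTheory.MeasurePreserving σ
      (MeasureTheory.volume.restrict (Set.Icc (0:ℝ) 1))
      (MeasureTheory.volume.restrict (Set.Icc (0:ℝ) 1)) ∧
    Set.MapsTo σ (Set.Icc (0:ℝ) 1) (Set.Icc (0:ℝ) 1)

/-- The cut distance `δ_□(W₁, W₂)`. -/
def deltaCut (W₁ W₂ : ℝ → ℝ → ℝ) : ℝ :=
  sInf { r : ℝ | ∃ σ₁ σ₂ : ℝ → ℝ, IsMPSelf σ₁ ∧ IsMPSelf σ₂ ∧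
    r = cutNorm (fun x y => W₁ (σ₁ x) (σ₁ y) - W₂ (σ₂ x) (σ₂ y)) }

/-- The binary entropy function `h` (base-2 logarithm; `logb 2 0 = 0` by convention,
so `h 0 = h 1 = 0`). -/
def binEnt (x : ℝ) : ℝ := -x * Real.logb 2 x - (1 - x) * Real.logb 2 (1 - x)

/-- `h̃ x = h (min x (1/2))`. -/
def htilde (x : ℝ) : ℝ := binEnt (min x (1/2))

/-- The entropy `Ent(W) = ∫₀¹∫₀¹ h(W(x,y)) dx dy` of a graphon. -/
def graphonEnt (W : ℝ → ℝ → ℝ) : ℝ :=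
  ∫ x in Set.Icc (0:ℝ) 1, ∫ y in Set.Icc (0:ℝ) 1, binEnt (W x y)

open Classical in
/-- The graphon `W_G` of a simple graph `G` on `{1, …, n}` (vertices as `Fin n`,
vertex `i : Fin n` representing `i+1`): `W_G x y = 1` iff `⌈nx⌉⌈ny⌉ ∈ E(G)`. -/
def graphonOfGraph {n : ℕ} (G : SimpleGraph (Fin n)) : ℝ → ℝ → ℝ := fun x y =>
  if ∃ i j : Fin n, G.Adj i j ∧ ⌈(n : ℝ) * x⌉ = ((i : ℕ) : ℤ) + 1 ∧
      ⌈(n : ℝ) * y⌉ = ((j : ℕ) : ℤ) + 1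
  then 1 else 0

/-- A labelled graph class: a set of graphs on `{1,…,n}` for each `n`. -/
abbrev GraphClass := ∀ n : ℕ, Set (SimpleGraph (Fin n))

/-- A graph class is closed under relabelling by permutations. -/
def IsGraphClass (Q : GraphClass) : Prop :=
  ∀ (n : ℕ) (π : Equiv.Perm (Fin n)) (G : SimpleGraph (Fin n)),
    G ∈ Q n → G.comap ⇑π ∈ Q n

/-- A hereditary graph class: a graph class closed under taking induced subgraphs
(relabelled by the order-preserving bijection). -/
def IsHereditary (Q : GraphClass) : Prop :=
  IsGraphClass Q ∧
    ∀ (m n : ℕ) (f : Fin m → Fin n), StrictMono f →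
      ∀ G ∈ Q n, G.comap f ∈ Q m

/-- `Q̂`: the set of graphons which are limits (in cut distance) of sequences of graphs in
the class `Q` whose orders tend to infinity. -/
def limitSet (Q : GraphClass) : Set (ℝ → ℝ → ℝ) :=
  { W | IsGraphon W ∧
    ∃ (nk : ℕ → ℕ) (Gk : ∀ k, SimpleGraph (Fin (nk k))),
      (∀ k, Gk k ∈ Q (nk k)) ∧ Filter.Tendsto nk Filter.atTop Filter.atTop ∧
      Filter.Tendsto (fun k => deltaCut (graphonOfGraph (Gk k)) W) Filter.atTop (nhds 0) }

/-- `C(n,2) = n(n-1)/2` as a real number. -/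
def choose2 (n : ℕ) : ℝ := (n : ℝ) * ((n : ℝ) - 1) / 2

open Classical in
/-- The step function `E[W | P]` obtained by averaging `W` over the products of the
parts of the partition `P` of `[0,1]`. -/
def condExpPart {k : ℕ} (P : Fin k → Set ℝ) (W : ℝ → ℝ → ℝ) : ℝ → ℝ → ℝ := fun x y =>
  ∑ i : Fin k, ∑ j : Fin k,
    if x ∈ P i ∧ y ∈ P j then ⨍ p in (P i) ×ˢ (P j), W p.1 p.2 else 0

/-- `W̄_n`: the step function of `W` for the partition of `[0,1]` into `n` consecutive
intervals of length `1/n`. -/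
def barStep (n : ℕ) (W : ℝ → ℝ → ℝ) : ℝ → ℝ → ℝ :=
  condExpPart (fun i : Fin n => Set.Ioc (((i : ℕ) : ℝ)/n) ((((i : ℕ) : ℝ) + 1)/n)) W

/-- `N̂_□(n, δ; W)`: the number of graphs `G` on `{1,…,n}` with `d_□(W_G, W) ≤ δ`. -/
def NhatCut (n : ℕ) (δ : ℝ) (W : ℝ → ℝ → ℝ) : ℕ :=
  Nat.card {G : SimpleGraph (Fin n) // dCut (graphonOfGraph G) W ≤ δ}

/-- `N_□(n, δ; W)`: the number of graphs `G` on `{1,…,n}` with `δ_□(W_G, W) ≤ δ`. -/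
def NCut (n : ℕ) (δ : ℝ) (W : ℝ → ℝ → ℝ) : ℕ :=
  Nat.card {G : SimpleGraph (Fin n) // deltaCut (graphonOfGraph G) W ≤ δ}

open Classical in
/-- The induced density `p(F; W)` of a graph `F` on `{1,…,k}` in a graphon `W`. -/
def inducedDensity {k : ℕ} (F : SimpleGraph (Fin k)) (W : ℝ → ℝ → ℝ) : ℝ :=
  ∫ x : Fin k → ℝ in Set.univ.pi (fun _ : Fin k => Set.Icc (0:ℝ) 1),
    ∏ i : Fin k, ∏ j : Fin k,
      if i < j then (if F.Adj i j then W (x i) (x j) else 1 - W (x i) (x j)) else 1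

open Classical in
/-- The randomness support graphon `1_{rand(W)}` of `W`. -/
def randIndicator (W : ℝ → ℝ → ℝ) : ℝ → ℝ → ℝ := fun x y =>
  if 0 < W x y ∧ W x y < 1 then 1 else 0

/-- A kernel `U` is `K_r`-free if `∏_{i<j} U(x_i, x_j) = 0` for a.e. `x ∈ [0,1]^r`. -/
def KFree (r : ℕ) (U : ℝ → ℝ → ℝ) : Prop :=
  ∀ᵐ x ∂(MeasureTheory.volume.restrict (Set.univ.pi fun _ : Fin r => Set.Icc (0:ℝ) 1)),
    (∏ i : Fin r, ∏ j : Fin r, if i < j then U (x i) (x j) else 1) = 0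

open Classical in
/-- The graphon `W^{(r,s)}`: equal to `1/2` off the diagonal blocks, `1` on the first `s`
diagonal blocks `I_i × I_i`, and `0` on the remaining diagonal blocks. -/
def Wrs (r s : ℕ) : ℝ → ℝ → ℝ := fun x y =>
  if ∃ i j : Fin r, i ≠ j ∧ x ∈ Set.Ioc (((i:ℕ):ℝ)/r) ((((i:ℕ):ℝ)+1)/r) ∧
      y ∈ Set.Ioc (((j:ℕ):ℝ)/r) ((((j:ℕ):ℝ)+1)/r)
  then 1/2
  else if ∃ i : Fin r, (i:ℕ) < s ∧ x ∈ Set.Ioc (((i:ℕ):ℝ)/r) ((((i:ℕ):ℝ)+1)/r) ∧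
      y ∈ Set.Ioc (((i:ℕ):ℝ)/r) ((((i:ℕ):ℝ)+1)/r)
  then 1 else 0

/-- `E_r = ⋃_{i ≠ j} I_i × I_j` where `I_i`, `i = 1, …, r`, are the consecutive
intervals of length `1/r` in `[0,1]`. -/
def Er (r : ℕ) : Set (ℝ × ℝ) :=
  ⋃ (i : Fin r) (j : Fin r) (_ : i ≠ j),
    (Set.Ioc (((i:ℕ):ℝ)/r) ((((i:ℕ):ℝ)+1)/r)) ×ˢ (Set.Ioc (((j:ℕ):ℝ)/r) ((((j:ℕ):ℝ)+1)/r))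

/-- `R_r`: the set of graphons equal to `1/2` on `E_r` and `{0,1}`-valued elsewhere
on `[0,1]²`. -/
def Rset (r : ℕ) : Set (ℝ → ℝ → ℝ) :=
  { W | IsGraphon W ∧ (∀ p ∈ Er r, W p.1 p.2 = 1/2) ∧
      ∀ p ∈ ((Set.Icc (0:ℝ) 1) ×ˢ (Set.Icc (0:ℝ) 1)) \ Er r,
        W p.1 p.2 = 0 ∨ W p.1 p.2 = 1 }

/-- A graphon is random-free if it is `{0,1}`-valued a.e. on `[0,1]²`. -/
def IsRandomFree (W : ℝ → ℝ → ℝ) : Prop :=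
  ∀ᵐ p ∂(MeasureTheory.volume.restrict ((Set.Icc (0:ℝ) 1) ×ˢ (Set.Icc (0:ℝ) 1))),
    W (Prod.fst p) (Prod.snd p) = 0 ∨ W (Prod.fst p) (Prod.snd p) = 1

/-!
Since `h ≥ 0` vanishes only at `0` and `1`, a graphon has entropy `0` exactly when it is
random-free.

Since `(x - 1/2)² ≤ 1 - h(x)`, a graphon of entropy close to `1` is close to `1/2` in `L¹`. A graph
in the class close to such a graphon in cut distance is therefore quasirandom, and vertices
realizing any prescribed adjacency pattern can be chosen greedily, one from each of a list of sets
of positive measure. Taking these sets to be separated intervals, up to the measure-preserving map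
hidden in the cut distance, forces the vertices to appear in increasing order; so the class contains
every graph. Conversely, the graphs of Sylvester's symmetric Hadamard matrices converge to `1/2` by
Lindsey's lemma.
-/

/-- Heredity for classes of graphs with linearly ordered vertices: closure under induced subgraphs
relabelled by the order-preserving bijection, without closure under permutations. -/
def IsOrderHereditary (Q : GraphClass) : Prop :=
  ∀ (m n : ℕ) (f : Fin m → Fin n), StrictMono f → ∀ G ∈ Q n, G.comap f ∈ Q m

/-- Lebesgue measure on `[0,1]`, as a measure on `ℝ`, the domain of the encoded graphons. -/
abbrev unitVolume : Measure ℝ := volume.restrict (Icc 0 1)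

/-- Lebesgue measure on `[0,1]²`, as a measure on `ℝ × ℝ`. -/
abbrev squareVolume : Measure (ℝ × ℝ) := unitVolume.prod unitVolume

instance : IsProbabilityMeasure unitVolume := ⟨by simp⟩

/-! ### Binary entropy -/

lemma binEnt_eq_binEntropy_div_log_two (x : ℝ) : binEnt x = Real.binEntropy x / Real.log 2 := by
  simp only [binEnt, Real.binEntropy_eq_negMulLog_add_negMulLog_one_sub, Real.negMulLog, Real.logb]
  ring

lemma measurable_binEnt : Measurable binEnt := by
  rw [funext binEnt_eq_binEntropy_div_log_two]
  exact (Real.binEntropy_continuous.div_const _).measurable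

lemma binEnt_nonneg {x : ℝ} (hx : x ∈ Icc (0 : ℝ) 1) : 0 ≤ binEnt x := by
  rw [binEnt_eq_binEntropy_div_log_two]
  exact div_nonneg (Real.binEntropy_nonneg hx.1 hx.2) (Real.log_nonneg one_le_two)

lemma binEnt_le_one (x : ℝ) : binEnt x ≤ 1 := by
  rw [binEnt_eq_binEntropy_div_log_two, div_le_one (Real.log_pos one_lt_two)]
  exact Real.binEntropy_le_log_two

lemma binEnt_eq_zero_iff {x : ℝ} : binEnt x = 0 ↔ x = 0 ∨ x = 1 := by
  rw [binEnt_eq_binEntropy_div_log_two, div_eq_zero_iff, Real.binEntropy_eq_zero,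
    or_iff_left (Real.log_pos one_lt_two).ne']

lemma binEnt_one_half : binEnt (1 / 2) = 1 := by
  rw [binEnt_eq_binEntropy_div_log_two, one_div, Real.binEntropy_two_inv,
    div_self (Real.log_pos one_lt_two).ne']

lemma negMulLog_le_sqrt_sub_add {x : ℝ} (hx : 0 ≤ x) :
    Real.negMulLog x ≤ √(2 * x) - 2 * x + x * Real.log 2 := by
  rcases hx.eq_or_lt with rfl | hx
  · simp
  have hs : 0 < √(2 * x) := by positivity
  have hs_sq : √(2 * x) ^ 2 = 2 * x := Real.sq_sqrt (by positivity)
  have hlog : Real.log x = 2 * Real.log √(2 * x) - Real.log 2 := by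
    rw [Real.log_sqrt (by positivity), Real.log_mul two_ne_zero hx.ne']
    ring
  have hle : 2 * x * (1 - (√(2 * x))⁻¹) ≤ 2 * x * Real.log √(2 * x) :=
    mul_le_mul_of_nonneg_left (Real.one_sub_inv_le_log_of_pos hs) (by positivity)
  have hinv : 2 * x * (√(2 * x))⁻¹ = √(2 * x) := by
    rw [← hs_sq, sq, mul_assoc, Real.sqrt_mul_self hs.le, mul_inv_cancel₀ hs.ne', mul_one]
  rw [Real.negMulLog, hlog]
  linarith

lemma sq_sub_half_le_log_two_sub_binEntropy {x : ℝ} (hx : x ∈ Icc (0 : ℝ) 1) :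
    (x - 1 / 2) ^ 2 ≤ Real.log 2 - Real.binEntropy x := by
  have hx' : 0 ≤ 1 - x := sub_nonneg.2 hx.2
  have hs : √(2 * x) ^ 2 = 2 * x := Real.sq_sqrt (mul_nonneg zero_le_two hx.1)
  have ht : √(2 * (1 - x)) ^ 2 = 2 * (1 - x) := Real.sq_sqrt (mul_nonneg zero_le_two hx')
  have hsum : Real.binEntropy x ≤ √(2 * x) + √(2 * (1 - x)) - 2 + Real.log 2 := by
    rw [Real.binEntropy_eq_negMulLog_add_negMulLog_one_sub]
    linarith [negMulLog_le_sqrt_sub_add hx.1, negMulLog_le_sqrt_sub_add hx']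
  set s := √(2 * x)
  set t := √(2 * (1 - x))
  -- With `s² + t² = 2`, the claim reduces to `((s² - t²) / 4)² ≤ ((s - 1)² + (t - 1)²) / 2`.
  have hst_le : (s + t) ^ 2 ≤ 4 := by nlinarith [sq_nonneg (s - t)]
  have hdiff : x - 1 / 2 = (s + t) * (s - t) / 4 := by linarith [sq_sub_sq s t]
  have hsq : (x - 1 / 2) ^ 2 ≤ (s - t) ^ 2 / 4 := by
    rw [hdiff]
    nlinarith [mul_le_mul_of_nonneg_right hst_le (sq_nonneg (s - t))]
  nlinarith [sq_nonneg (s + t - 2)]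

lemma sq_sub_half_le_one_sub_binEnt {x : ℝ} (hx : x ∈ Icc (0 : ℝ) 1) :
    (x - 1 / 2) ^ 2 ≤ 1 - binEnt x := by
  have hlog : 0 < Real.log 2 := Real.log_pos one_lt_two
  have hlog_le : Real.log 2 ≤ 1 := by linarith [Real.log_le_sub_one_of_pos (zero_lt_two (α := ℝ))]
  have hdef : Real.log 2 - Real.binEntropy x = Real.log 2 * (1 - binEnt x) := by
    rw [binEnt_eq_binEntropy_div_log_two, mul_sub, mul_one, mul_div_cancel₀ _ hlog.ne']
  calc (x - 1 / 2) ^ 2 ≤ Real.log 2 * (1 - binEnt x) :=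
        (sq_sub_half_le_log_two_sub_binEntropy hx).trans_eq hdef
    _ ≤ 1 - binEnt x := mul_le_of_le_one_left (sub_nonneg.2 (binEnt_le_one x)) hlog_le

/-! ### Entropy of graphons -/

lemma isGraphon_const {a : ℝ} (ha : a ∈ Icc (0 : ℝ) 1) : IsGraphon fun _ _ => a :=
  ⟨fun _ _ => rfl, measurable_const, fun _ _ => ha⟩

namespace IsGraphon

variable {W : ℝ → ℝ → ℝ}

lemma comp (hW : IsGraphon W) {σ : ℝ → ℝ} (hσ : Measurable σ) :
    IsGraphon fun x y => W (σ x) (σ y) :=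
  ⟨fun _ _ => hW.1 _ _, hW.2.1.comp (hσ.prodMap hσ), fun _ _ => hW.2.2 _ _⟩

lemma integrable (hW : IsGraphon W) : Integrable (fun p : ℝ × ℝ => W p.1 p.2) squareVolume :=
  .of_mem_Icc 0 1 hW.2.1.aemeasurable (.of_forall fun _ => hW.2.2 _ _)

lemma integrable_binEnt (hW : IsGraphon W) :
    Integrable (fun p : ℝ × ℝ => binEnt (W p.1 p.2)) squareVolume :=
  .of_mem_Icc 0 1 (measurable_binEnt.comp hW.2.1).aemeasurable
    (.of_forall fun _ => ⟨binEnt_nonneg (hW.2.2 _ _), binEnt_le_one _⟩)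

lemma graphonEnt_eq_integral (hW : IsGraphon W) :
    graphonEnt W = ∫ p, binEnt (W p.1 p.2) ∂squareVolume :=
  (integral_prod _ hW.integrable_binEnt).symm

lemma graphonEnt_nonneg (hW : IsGraphon W) : 0 ≤ graphonEnt W := by
  rw [hW.graphonEnt_eq_integral]
  exact integral_nonneg fun _ => binEnt_nonneg (hW.2.2 _ _)

lemma one_sub_graphonEnt_eq_integral (hW : IsGraphon W) :
    1 - graphonEnt W = ∫ p, (1 - binEnt (W p.1 p.2)) ∂squareVolume := by
  rw [integral_sub (integrable_const _) hW.integrable_binEnt, hW.graphonEnt_eq_integral]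
  simp

lemma graphonEnt_le_one (hW : IsGraphon W) : graphonEnt W ≤ 1 := by
  rw [← sub_nonneg, hW.one_sub_graphonEnt_eq_integral]
  exact integral_nonneg fun _ => sub_nonneg.2 (binEnt_le_one _)

lemma graphonEnt_eq_zero_iff (hW : IsGraphon W) : graphonEnt W = 0 ↔ IsRandomFree W := by
  rw [hW.graphonEnt_eq_integral, integral_eq_zero_iff_of_nonneg
    (fun _ => binEnt_nonneg (hW.2.2 _ _)) hW.integrable_binEnt, IsRandomFree,
    Measure.volume_eq_prod, ← Measure.prod_restrict]
  exact eventually_congr (.of_forall fun _ => binEnt_eq_zero_iff)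

lemma sq_integral_abs_sub_half_le (hW : IsGraphon W) :
    (∫ p, |W p.1 p.2 - 1 / 2| ∂squareVolume) ^ 2 ≤ 1 - graphonEnt W := by
  have hmeas : Measurable fun p : ℝ × ℝ => W p.1 p.2 - 1 / 2 := hW.2.1.sub_const _
  have hbound : ∀ p : ℝ × ℝ, (W p.1 p.2 - 1 / 2) ^ 2 ∈ Icc (0 : ℝ) 1 := fun p =>
    ⟨sq_nonneg _, by nlinarith [(hW.2.2 p.1 p.2).1, (hW.2.2 p.1 p.2).2]⟩
  have hsq : Integrable (fun p : ℝ × ℝ => (W p.1 p.2 - 1 / 2) ^ 2) squareVolume :=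
    .of_mem_Icc 0 1 (hmeas.pow_const 2).aemeasurable (.of_forall hbound)
  calc (∫ p, |W p.1 p.2 - 1 / 2| ∂squareVolume) ^ 2
      ≤ ∫ p, |W p.1 p.2 - 1 / 2| ^ 2 ∂squareVolume :=
        (even_two.convexOn_pow (𝕜 := ℝ)).map_integral_le (continuous_pow 2).continuousOn
          isClosed_univ (.of_forall fun _ => mem_univ _)
          (hW.integrable.sub (integrable_const _)).abs (by simpa [Function.comp_def] using hsq)
    _ = ∫ p, (W p.1 p.2 - 1 / 2) ^ 2 ∂squareVolume := by simp only [sq_abs]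
    _ ≤ ∫ p, (1 - binEnt (W p.1 p.2)) ∂squareVolume :=
        integral_mono hsq ((integrable_const _).sub hW.integrable_binEnt)
          fun _ => sq_sub_half_le_one_sub_binEnt (hW.2.2 _ _)
    _ = 1 - graphonEnt W := hW.one_sub_graphonEnt_eq_integral.symm

end IsGraphon

lemma graphonEnt_const_half : graphonEnt (fun _ _ => 1 / 2) = 1 := by
  simp only [graphonEnt, binEnt_one_half]
  simp

lemma sSup_image_graphonEnt_eq_zero_iff {𝒲 : Set (ℝ → ℝ → ℝ)} (h𝒲 : ∀ W ∈ 𝒲, IsGraphon W) :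
    sSup (graphonEnt '' 𝒲) = 0 ↔ ∀ W ∈ 𝒲, IsRandomFree W := by
  have hbdd : BddAbove (graphonEnt '' 𝒲) :=
    ⟨1, forall_mem_image.2 fun W hW => (h𝒲 W hW).graphonEnt_le_one⟩
  refine ⟨fun h W hW => ?_, fun h => ?_⟩
  · have hle : graphonEnt W ≤ 0 := h ▸ le_csSup hbdd (mem_image_of_mem _ hW)
    exact (h𝒲 W hW).graphonEnt_eq_zero_iff.1 (hle.antisymm (h𝒲 W hW).graphonEnt_nonneg)
  · have hzero : ∀ W ∈ 𝒲, graphonEnt W = 0 := fun W hW =>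
      (h𝒲 W hW).graphonEnt_eq_zero_iff.2 (h W hW)
    exact le_antisymm (Real.sSup_nonpos (forall_mem_image.2 fun W hW => (hzero W hW).le))
      (Real.sSup_nonneg (forall_mem_image.2 fun W hW => (hzero W hW).ge))

/-! ### Cut norm and cut distance -/

section CutNorm

variable {U V : ℝ → ℝ → ℝ}

lemma setIntegral_prod_squareVolume (f : ℝ × ℝ → ℝ) {S T : Set ℝ} (hS : MeasurableSet S)
    (hT : MeasurableSet T) :
    ∫ p in S ×ˢ T, f p ∂squareVolume = ∫ p in (S ∩ Icc 0 1) ×ˢ (T ∩ Icc 0 1), f p := by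
  rw [← Measure.prod_restrict, Measure.restrict_restrict hS, Measure.restrict_restrict hT,
    Measure.prod_restrict, Measure.volume_eq_prod]

lemma abs_setIntegral_le_integral_abs {α : Type*} [MeasurableSpace α] {μ : Measure α} {f : α → ℝ}
    (hf : Integrable f μ) (s : Set α) : |∫ x in s, f x ∂μ| ≤ ∫ x, |f x| ∂μ :=
  (abs_integral_le_integral_abs).trans
    (setIntegral_le_integral hf.abs (.of_forall fun _ => abs_nonneg _))

lemma cutNorm_le_iff (hU : Integrable (fun p : ℝ × ℝ => U p.1 p.2) squareVolume) {c : ℝ} :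
    cutNorm U ≤ c ↔ ∀ S T, MeasurableSet S → MeasurableSet T →
      |∫ p in S ×ˢ T, U p.1 p.2 ∂squareVolume| ≤ c := by
  have hsub : ∀ {S T : Set ℝ}, MeasurableSet S → MeasurableSet T → S ⊆ Icc 0 1 → T ⊆ Icc 0 1 →
      ∫ p in S ×ˢ T, U p.1 p.2 = ∫ p in S ×ˢ T, U p.1 p.2 ∂squareVolume := by
    intro S T hS hT hS₁ hT₁
    rw [setIntegral_prod_squareVolume _ hS hT, inter_eq_self_of_subset_left hS₁,
      inter_eq_self_of_subset_left hT₁]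
  refine ⟨fun h S T hS hT => ?_, fun h => csSup_le
    ⟨_, ∅, ∅, .empty, .empty, empty_subset _, empty_subset _, rfl⟩ ?_⟩
  · rw [setIntegral_prod_squareVolume _ hS hT]
    refine le_trans ?_ h
    refine le_csSup ⟨∫ p, |U p.1 p.2| ∂squareVolume, ?_⟩ ⟨_, _, hS.inter measurableSet_Icc,
      hT.inter measurableSet_Icc, inter_subset_right, inter_subset_right, rfl⟩
    rintro _ ⟨S, T, hS, hT, hS₁, hT₁, rfl⟩
    rw [hsub hS hT hS₁ hT₁]
    exact abs_setIntegral_le_integral_abs hU _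
  · rintro _ ⟨S, T, hS, hT, hS₁, hT₁, rfl⟩
    rw [hsub hS hT hS₁ hT₁]
    exact h S T hS hT

lemma abs_setIntegral_le_cutNorm (hU : Integrable (fun p : ℝ × ℝ => U p.1 p.2) squareVolume)
    {S T : Set ℝ} (hS : MeasurableSet S) (hT : MeasurableSet T) :
    |∫ p in S ×ˢ T, U p.1 p.2 ∂squareVolume| ≤ cutNorm U :=
  (cutNorm_le_iff hU).1 le_rfl S T hS hT

lemma cutNorm_nonneg (U : ℝ → ℝ → ℝ) : 0 ≤ cutNorm U := by
  refine Real.sSup_nonneg ?_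
  rintro _ ⟨S, T, -, -, -, -, rfl⟩
  exact abs_nonneg _

lemma cutNorm_add_le (hU : Integrable (fun p : ℝ × ℝ => U p.1 p.2) squareVolume)
    (hV : Integrable (fun p : ℝ × ℝ => V p.1 p.2) squareVolume) :
    cutNorm (fun x y => U x y + V x y) ≤ cutNorm U + cutNorm V := by
  refine (cutNorm_le_iff (hU.add hV)).2 fun S T hS hT => ?_
  rw [integral_add hU.integrableOn hV.integrableOn]
  exact (abs_add_le _ _).trans
    (add_le_add (abs_setIntegral_le_cutNorm hU hS hT) (abs_setIntegral_le_cutNorm hV hS hT))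

lemma cutNorm_le_integral_abs (hU : Integrable (fun p : ℝ × ℝ => U p.1 p.2) squareVolume) :
    cutNorm U ≤ ∫ p, |U p.1 p.2| ∂squareVolume :=
  (cutNorm_le_iff hU).2 fun _ _ _ _ => abs_setIntegral_le_integral_abs hU _

end CutNorm

lemma isMPSelf_id : IsMPSelf id := ⟨.id _, mapsTo_id _⟩

section CutDistance

variable {W₁ W₂ : ℝ → ℝ → ℝ}

lemma deltaCut_nonneg (W₁ W₂ : ℝ → ℝ → ℝ) : 0 ≤ deltaCut W₁ W₂ := by
  refine Real.sInf_nonneg ?_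
  rintro _ ⟨σ₁, σ₂, -, -, rfl⟩
  exact cutNorm_nonneg _

lemma deltaCut_le_dCut (W₁ W₂ : ℝ → ℝ → ℝ) : deltaCut W₁ W₂ ≤ dCut W₁ W₂ := by
  refine csInf_le ⟨0, ?_⟩ ⟨id, id, isMPSelf_id, isMPSelf_id, rfl⟩
  rintro _ ⟨σ₁, σ₂, -, -, rfl⟩
  exact cutNorm_nonneg _

lemma IsMPSelf.integral_comp {σ : ℝ → ℝ} (hσ : IsMPSelf σ) {f : ℝ × ℝ → ℝ}
    (hf : AEStronglyMeasurable f squareVolume) :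
    ∫ p : ℝ × ℝ, f (σ p.1, σ p.2) ∂squareVolume = ∫ p, f p ∂squareVolume := by
  have hmp : MeasurePreserving (Prod.map σ σ) squareVolume squareVolume := hσ.1.prod hσ.1
  conv_rhs => rw [← hmp.map_eq, integral_map hmp.aemeasurable (by rwa [hmp.map_eq])]
  rfl

/-- The map applied to `W₂` is absorbed since the `L¹` distance to a constant is invariant. -/
lemma exists_isMPSelf_dCut_const_le (hW₁ : IsGraphon W₁) (hW₂ : IsGraphon W₂) {a δ : ℝ}
    (hδ : deltaCut W₁ W₂ < δ) :
    ∃ σ, IsMPSelf σ ∧ dCut (fun x y => W₁ (σ x) (σ y)) (fun _ _ => a) ≤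
      δ + ∫ p, |W₂ p.1 p.2 - a| ∂squareVolume := by
  obtain ⟨_, ⟨σ₁, σ₂, hσ₁, hσ₂, rfl⟩, hlt⟩ :=
    exists_lt_of_csInf_lt (by exact ⟨_, id, id, isMPSelf_id, isMPSelf_id, rfl⟩) hδ
  have h₁ := (hW₁.comp hσ₁.1.measurable).integrable
  have h₂ := (hW₂.comp hσ₂.1.measurable).integrable
  have hinv : ∫ p : ℝ × ℝ, |W₂ (σ₂ p.1) (σ₂ p.2) - a| ∂squareVolume =
      ∫ p, |W₂ p.1 p.2 - a| ∂squareVolume :=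
    hσ₂.integral_comp (f := fun p => |W₂ p.1 p.2 - a|)
      (hW₂.integrable.sub (integrable_const a)).abs.aestronglyMeasurable
  refine ⟨σ₁, hσ₁, ?_⟩
  calc dCut (fun x y => W₁ (σ₁ x) (σ₁ y)) (fun _ _ => a)
      = cutNorm fun x y =>
          (W₁ (σ₁ x) (σ₁ y) - W₂ (σ₂ x) (σ₂ y)) + (W₂ (σ₂ x) (σ₂ y) - a) := by
        simp only [dCut, sub_add_sub_cancel]
    _ ≤ cutNorm (fun x y => W₁ (σ₁ x) (σ₁ y) - W₂ (σ₂ x) (σ₂ y)) +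
          cutNorm (fun x y => W₂ (σ₂ x) (σ₂ y) - a) :=
        cutNorm_add_le (h₁.sub h₂) (h₂.sub (integrable_const a))
    _ ≤ δ + ∫ p, |W₂ p.1 p.2 - a| ∂squareVolume :=
        add_le_add hlt.le (hinv ▸ cutNorm_le_integral_abs (h₂.sub (integrable_const a)))

end CutDistance

/-! ### Greedy embedding -/

section LocallyDense

variable {α : Type*} [MeasurableSpace α] {μ : Measure α} {q ε c : ℝ} {E : Set (α × α)}

/-- The measure-theoretic analogue of a locally `(q, ε)`-dense graph: up to an additive error `ε`,
every rectangle is filled by the relation `E` in proportion at least `q`. -/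
def IsLocallyDense (μ : Measure α) (q ε : ℝ) (E : Set (α × α)) : Prop :=
  ∀ S T, MeasurableSet S → MeasurableSet T →
    q * μ.real S * μ.real T ≤ (μ.prod μ).real (E ∩ S ×ˢ T) + ε

lemma IsLocallyDense.mono {ε' : ℝ} (hE : IsLocallyDense μ q ε E) (hε : ε ≤ ε') :
    IsLocallyDense μ q ε' E :=
  fun S T hS hT => (hE S T hS hT).trans (by gcongr)

lemma IsLocallyDense.setOf_mem_iff (hE : IsLocallyDense μ q ε E) (hE' : IsLocallyDense μ q ε Eᶜ)
    (P : Prop) : IsLocallyDense μ q ε {z | z ∈ E ↔ P} := by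
  by_cases hP : P
  · simpa only [hP, iff_true, ofPred_mem_eq] using hE
  · simpa only [hP, iff_false, compl_def] using hE'

variable [IsFiniteMeasure μ]

lemma measurable_measureReal_inter_prodMk_preimage (hE : MeasurableSet E) {T : Set α}
    (hT : MeasurableSet T) : Measurable fun x => μ.real (T ∩ Prod.mk x ⁻¹' E) :=
  (measurable_measure_prodMk_left ((hT.preimage measurable_snd).inter hE)).ennreal_toReal

lemma measureReal_inter_prod_eq_integral (hE : MeasurableSet E) (S T : Set α) :
    (μ.prod μ).real (E ∩ S ×ˢ T) = ∫ x in S, μ.real (T ∩ Prod.mk x ⁻¹' E) ∂μ := by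
  rw [← measureReal_restrict_apply hE, ← Measure.prod_restrict, measureReal_def,
    Measure.prod_apply hE, ← integral_toReal (measurable_measure_prodMk_left hE).aemeasurable
      (.of_forall fun _ => measure_lt_top _ _)]
  simp only [Measure.restrict_apply (measurable_prodMk_left hE), measureReal_def, inter_comm]

lemma IsLocallyDense.measureReal_few_neighbors_mul_le (hE : MeasurableSet E)
    (hdense : IsLocallyDense μ q ε E) (hq : 0 ≤ q) {T : Set α} (hT : MeasurableSet T)
    (hc : c ≤ μ.real T) :
    μ.real {x | μ.real (T ∩ Prod.mk x ⁻¹' E) < q * c / 2} * (q * c / 2) ≤ ε := by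
  set S := {x | μ.real (T ∩ Prod.mk x ⁻¹' E) < q * c / 2}
  have hmeas := measurable_measureReal_inter_prodMk_preimage (μ := μ) hE hT
  have hS : MeasurableSet S := measurableSet_lt hmeas measurable_const
  have hlower : q * μ.real S * c ≤ (μ.prod μ).real (E ∩ S ×ˢ T) + ε :=
    (mul_le_mul_of_nonneg_left hc (by positivity)).trans (hdense S T hS hT)
  have hupper : (μ.prod μ).real (E ∩ S ×ˢ T) ≤ μ.real S * (q * c / 2) :=
    calc (μ.prod μ).real (E ∩ S ×ˢ T)
        = ∫ x in S, μ.real (T ∩ Prod.mk x ⁻¹' E) ∂μ := measureReal_inter_prod_eq_integral hE S T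
      _ ≤ ∫ _ in S, q * c / 2 ∂μ :=
          setIntegral_mono_on (.of_mem_Icc 0 (μ.real univ) hmeas.aemeasurable (.of_forall fun _ =>
            ⟨measureReal_nonneg, measureReal_mono (subset_univ _)⟩)) (integrable_const _) hS
            fun _ hx => hx.le
      _ = μ.real S * (q * c / 2) := by rw [setIntegral_const, smul_eq_mul]
  linarith

lemma exists_mem_forall_many_neighbors {ι : Type*} [Fintype ι] {E : ι → Set (α × α)}
    {V : Set α} {T : ι → Set α} (hE : ∀ i, MeasurableSet (E i))
    (hdense : ∀ i, IsLocallyDense μ q ε (E i)) (hT : ∀ i, MeasurableSet (T i))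
    (hq : 0 < q) (hc : 0 < c) (hV : c ≤ μ.real V) (hTc : ∀ i, c ≤ μ.real (T i))
    (hε : Fintype.card ι * ε < c * (q * c / 2)) :
    ∃ x ∈ V, ∀ i, q * c / 2 ≤ μ.real (T i ∩ Prod.mk x ⁻¹' E i) := by
  by_contra! hfew
  have hcover : V ⊆ ⋃ i, {x | μ.real (T i ∩ Prod.mk x ⁻¹' E i) < q * c / 2} := fun x hx =>
    mem_iUnion.2 (hfew x hx)
  have hunion : c * (q * c / 2) ≤ Fintype.card ι * ε :=
    calc c * (q * c / 2)
        ≤ (∑ i, μ.real {x | μ.real (T i ∩ Prod.mk x ⁻¹' E i) < q * c / 2}) * (q * c / 2) := by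
          gcongr
          exact hV.trans ((measureReal_mono hcover).trans (measureReal_iUnion_fintype_le _))
      _ = ∑ i, μ.real {x | μ.real (T i ∩ Prod.mk x ⁻¹' E i) < q * c / 2} * (q * c / 2) :=
          Finset.sum_mul ..
      _ ≤ ∑ _ : ι, ε := Finset.sum_le_sum fun i _ =>
          (hdense i).measureReal_few_neighbors_mul_le (hE i) hq.le (hT i) (hTc i)
      _ = Fintype.card ι * ε := by simp
  exact hunion.not_gt hε

variable (μ) in
theorem exists_greedy_embedding (m : ℕ) (hq : 0 < q) (hc : 0 < c) :
    ∃ ε > 0, ∀ E, MeasurableSet E → IsLocallyDense μ q ε E → IsLocallyDense μ q ε Eᶜ →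
      ∀ (R : Fin m → Fin m → Prop) (V : Fin m → Set α), (∀ i, MeasurableSet (V i)) →
        (∀ i, c ≤ μ.real (V i)) →
        ∃ x : Fin m → α, (∀ i, x i ∈ V i) ∧ ∀ i j, i < j → ((x i, x j) ∈ E ↔ R i j) := by
  induction m generalizing c with
  | zero => exact ⟨1, one_pos, fun _ _ _ _ _ _ _ _ => ⟨finZeroElim, finZeroElim, finZeroElim⟩⟩
  | succ m ih =>
    obtain ⟨ε, hε, hembed⟩ := ih (c := q * c / 2) (by positivity)
    refine ⟨min ε (c * (q * c / 2) / (m + 1)), by positivity,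
      fun E hE hdense hdense' R V hV hVc => ?_⟩
    let E' (i : Fin m) : Set (α × α) := {z | z ∈ E ↔ R 0 i.succ}
    have hE' (i) : MeasurableSet (E' i) := hE.iff (.const _)
    have hsmall : Fintype.card (Fin m) * (c * (q * c / 2) / (m + 1)) < c * (q * c / 2) := by
      rw [Fintype.card_fin, mul_div_assoc', div_lt_iff₀ (by positivity), mul_comm]
      exact mul_lt_mul_of_pos_left (lt_add_one _) (by positivity)
    obtain ⟨x₀, hx₀, hmany⟩ : ∃ x ∈ V 0, ∀ i, q * c / 2 ≤ μ.real (V i.succ ∩ Prod.mk x ⁻¹' E' i) :=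
      exists_mem_forall_many_neighbors hE'
        (fun _ => (hdense.setOf_mem_iff hdense' _).mono (min_le_right _ _))
        (fun i => hV i.succ) hq hc (hVc 0) (fun i => hVc i.succ) hsmall
    obtain ⟨x, hxV, hxR⟩ := hembed E hE (hdense.mono (min_le_left _ _))
      (hdense'.mono (min_le_left _ _)) (fun i j => R i.succ j.succ) _
      (fun i => (hV i.succ).inter (measurable_prodMk_left (hE' i))) hmany
    refine ⟨Fin.cons x₀ x, Fin.cases hx₀ fun i => (hxV i).1, Fin.cases ?_ fun i => ?_⟩
    · exact Fin.cases (fun h => absurd h (lt_irrefl _)) fun j _ => (hxV j).2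
    · exact Fin.cases (fun h => absurd h (Fin.not_lt_zero _))
        fun j h => hxR i j (Fin.succ_lt_succ_iff.1 h)

end LocallyDense

lemma setIntegral_indicator_one_sub_const {E : Set (ℝ × ℝ)} (hE : MeasurableSet E) (a : ℝ)
    (S T : Set ℝ) :
    ∫ p in S ×ˢ T, (E.indicator 1 p - a) ∂squareVolume =
      squareVolume.real (E ∩ S ×ˢ T) - a * (unitVolume.real S * unitVolume.real T) := by
  have hint : Integrable (E.indicator (1 : ℝ × ℝ → ℝ)) squareVolume :=
    (integrable_const 1).indicator hE
  rw [integral_sub hint.integrableOn (integrable_const a), integral_indicator_one hE,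
    measureReal_restrict_apply hE, setIntegral_const, measureReal_prod_prod, smul_eq_mul,
    mul_comm a]

lemma isLocallyDense_of_dCut_le {E : Set (ℝ × ℝ)} (hE : MeasurableSet E) {a ε : ℝ}
    (h : dCut (fun x y => E.indicator 1 (x, y)) (fun _ _ => a) ≤ ε) :
    IsLocallyDense unitVolume a ε E ∧ IsLocallyDense unitVolume (1 - a) ε Eᶜ := by
  have hint : Integrable (E.indicator (1 : ℝ × ℝ → ℝ)) squareVolume :=
    (integrable_const 1).indicator hE
  have hdisc : ∀ S T, MeasurableSet S → MeasurableSet T →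
      |squareVolume.real (E ∩ S ×ˢ T) - a * (unitVolume.real S * unitVolume.real T)| ≤ ε := by
    intro S T hS hT
    rw [← setIntegral_indicator_one_sub_const hE]
    exact (cutNorm_le_iff (hint.sub (integrable_const a))).1 h S T hS hT
  refine ⟨fun S T hS hT => by linarith [(abs_le.1 (hdisc S T hS hT)).1], fun S T hS hT => ?_⟩
  have hcompl : squareVolume.real (E ∩ S ×ˢ T) + squareVolume.real (Eᶜ ∩ S ×ˢ T) =
      unitVolume.real S * unitVolume.real T := by
    rw [← measureReal_prod_prod, inter_comm, inter_comm Eᶜ, ← Set.sdiff_eq,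
      measureReal_inter_add_sdiff hE]
  linarith [(abs_le.1 (hdisc S T hS hT)).2]

/-! ### Graphons of graphs -/

section Cell

variable {N i j : ℕ} {x y : ℝ}

/-- The `i`-th of the `N` intervals of length `1/N`, indexed from `0`; vertex `i : Fin N` of a graph
occupies `cell N i` in its graphon. -/
def cell (N i : ℕ) : Set ℝ := Ioc (i / N) ((i + 1) / N)

lemma measurableSet_cell : MeasurableSet (cell N i) := measurableSet_Ioc

lemma mem_cell_iff (hN : 0 < N) : x ∈ cell N i ↔ ⌈(N : ℝ) * x⌉ = (i : ℤ) + 1 := by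
  have hN' : (0 : ℝ) < N := Nat.cast_pos.2 hN
  rw [cell, mem_Ioc, div_lt_iff₀ hN', le_div_iff₀ hN', mul_comm x, Int.ceil_eq_iff]
  push_cast
  rw [add_sub_cancel_right]

lemma eq_of_mem_cell (hN : 0 < N) (hi : x ∈ cell N i) (hj : x ∈ cell N j) : i = j := by
  rw [mem_cell_iff hN] at hi hj
  omega

lemma exists_mem_cell (hN : 0 < N) (hx : x ∈ Ioc 0 1) : ∃ i : Fin N, x ∈ cell N i := by
  have hN' : (0 : ℝ) < N := Nat.cast_pos.2 hN
  have hpos : 0 < ⌈(N : ℝ) * x⌉ := Int.ceil_pos.2 (mul_pos hN' hx.1)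
  have hle : ⌈(N : ℝ) * x⌉ ≤ N := Int.ceil_le.2 (mul_le_of_le_one_right hN'.le hx.2)
  refine ⟨⟨(⌈(N : ℝ) * x⌉ - 1).toNat, by omega⟩, (mem_cell_iff hN).2 ?_⟩
  simp only
  omega

lemma cell_subset_Ioc (hi : i < N) : cell N i ⊆ Ioc 0 1 :=
  Ioc_subset_Ioc (by positivity) (div_le_one_of_le₀ (by exact_mod_cast hi) N.cast_nonneg)

lemma iUnion_cell (hN : 0 < N) : ⋃ i : Fin N, cell N i = Ioc 0 1 :=
  subset_antisymm (iUnion_subset fun i => cell_subset_Ioc i.2)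
    fun _ hx => mem_iUnion.2 (exists_mem_cell hN hx)

lemma measureReal_cell (hi : i < N) : unitVolume.real (cell N i) = 1 / N := by
  rw [measureReal_restrict_apply measurableSet_cell,
    inter_eq_self_of_subset_left ((cell_subset_Ioc hi).trans Ioc_subset_Icc_self), cell,
    Real.volume_real_Ioc_of_le (by gcongr; linarith)]
  ring

lemma add_le_of_mem_cell (hx : x ∈ cell N i) (hy : y ∈ cell N j) (hij : i + 2 ≤ j) :
    x + 1 / N ≤ y :=
  calc x + 1 / N ≤ (i + 1) / N + 1 / N := by gcongr; exact hx.2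
    _ = ((i + 2 : ℕ) : ℝ) / N := by push_cast; ring
    _ ≤ j / N := by gcongr
    _ ≤ y := hy.1.le

lemma lt_of_mem_cell (hx : x ∈ cell N i) (hy : y ∈ cell N j) (hxy : x + 1 / N ≤ y) : i < j := by
  by_contra! hji
  have hle : (j : ℝ) / N ≤ i / N := by gcongr
  linarith [hx.1, hy.2, add_div (j : ℝ) 1 N]

end Cell

section GraphonOfGraph

variable {N : ℕ} {G : SimpleGraph (Fin N)} {x y : ℝ}

/-- The support of the graphon of `G`. -/
def edgeRegion (G : SimpleGraph (Fin N)) : Set (ℝ × ℝ) :=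
  ⋃ e ∈ {e : Fin N × Fin N | G.Adj e.1 e.2}, cell N e.1 ×ˢ cell N e.2

lemma measurableSet_edgeRegion : MeasurableSet (edgeRegion G) :=
  .biUnion (to_countable _) fun _ _ => measurableSet_cell.prod measurableSet_cell

lemma mk_mem_edgeRegion :
    (x, y) ∈ edgeRegion G ↔ ∃ i j : Fin N, G.Adj i j ∧ x ∈ cell N i ∧ y ∈ cell N j := by
  simp only [edgeRegion, mem_iUnion, mem_ofPred_eq, Prod.exists, mem_prod, exists_prop]

lemma mk_mem_edgeRegion_iff_adj {i j : Fin N} (hx : x ∈ cell N i) (hy : y ∈ cell N j) :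
    (x, y) ∈ edgeRegion G ↔ G.Adj i j := by
  rw [mk_mem_edgeRegion]
  refine ⟨?_, fun h => ⟨i, j, h, hx, hy⟩⟩
  rintro ⟨i', j', hadj, hx', hy'⟩
  rwa [Fin.ext (eq_of_mem_cell i.pos hx hx'), Fin.ext (eq_of_mem_cell i.pos hy hy')]

lemma graphonOfGraph_eq_indicator (G : SimpleGraph (Fin N)) (x y : ℝ) :
    graphonOfGraph G x y = (edgeRegion G).indicator 1 (x, y) := by
  classical
  rw [graphonOfGraph, indicator_apply, Pi.one_apply]
  refine if_congr (mk_mem_edgeRegion.trans (exists₂_congr fun i j => ?_)).symm rfl rfl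
  rw [mem_cell_iff i.pos, mem_cell_iff i.pos]

lemma isGraphon_graphonOfGraph (G : SimpleGraph (Fin N)) : IsGraphon (graphonOfGraph G) := by
  refine ⟨fun x y => ?_, ?_, fun x y => ?_⟩
  · have hsymm : (x, y) ∈ edgeRegion G ↔ (y, x) ∈ edgeRegion G := by
      rw [mk_mem_edgeRegion, mk_mem_edgeRegion, exists_comm]
      exact exists₂_congr fun i j => and_congr (G.adj_comm _ _) and_comm
    classical
    simp only [graphonOfGraph_eq_indicator, indicator_apply, hsymm, Pi.one_apply]
  · rw [show Function.uncurry (graphonOfGraph G) = (edgeRegion G).indicator 1 from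
      funext fun p => graphonOfGraph_eq_indicator G p.1 p.2]
    exact measurable_one.indicator measurableSet_edgeRegion
  · rw [graphonOfGraph_eq_indicator]
    exact ⟨indicator_nonneg (fun _ _ => zero_le_one) _,
      indicator_le_self' (fun _ _ => zero_le_one) _⟩

end GraphonOfGraph

/-! ### Ordered subgraphs of quasirandom graphs -/

lemma exists_comap_eq_of_dCut_le {n : ℕ} (hn : 0 < n) (F : SimpleGraph (Fin n)) :
    ∃ ε > 0, ∀ {N : ℕ} (G : SimpleGraph (Fin N)) (σ : ℝ → ℝ), 2 * n ≤ N → IsMPSelf σ →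
      dCut (fun x y => graphonOfGraph G (σ x) (σ y)) (fun _ _ => 1 / 2) ≤ ε →
      ∃ f : Fin n → Fin N, StrictMono f ∧ G.comap f = F := by
  obtain ⟨ε, hε, hembed⟩ := exists_greedy_embedding unitVolume n (one_half_pos (α := ℝ))
    (c := 1 / (2 * n : ℕ)) (by positivity)
  refine ⟨ε, hε, fun {N} G σ hN hσ hG => ?_⟩
  let E : Set (ℝ × ℝ) := Prod.map σ σ ⁻¹' edgeRegion G
  have hE : MeasurableSet E := (hσ.1.measurable.prodMap hσ.1.measurable) measurableSet_edgeRegion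
  simp only [graphonOfGraph_eq_indicator] at hG
  obtain ⟨hdense, hdense'⟩ := isLocallyDense_of_dCut_le (E := E) hE hG
  rw [sub_half] at hdense'
  -- Only every other cell is used, so that points of different cells have images at least `1 / N`
  -- apart, and hence lie in the cells of distinct vertices of `G`, in the right order.
  have hodd (i : Fin n) : 2 * (i : ℕ) + 1 < 2 * n := by omega
  obtain ⟨x, hxcell, hxF⟩ := hembed E hE hdense hdense' F.Adj
    (fun i => σ ⁻¹' cell (2 * n) (2 * i + 1)) (fun i => hσ.1.measurable measurableSet_cell)
    (fun i => by rw [hσ.1.measureReal_preimage measurableSet_cell.nullMeasurableSet,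
      measureReal_cell (hodd i)])
  have hN₀ : 0 < N := by omega
  choose f hf using fun i => exists_mem_cell hN₀ (cell_subset_Ioc (hodd i) (hxcell i))
  have hmono : StrictMono f := fun i j hij => lt_of_mem_cell (hf i) (hf j) <|
    calc σ (x i) + 1 / N ≤ σ (x i) + 1 / (2 * n : ℕ) := by gcongr
      _ ≤ σ (x j) := add_le_of_mem_cell (hxcell i) (hxcell j) (by omega)
  have hadj (i j) (hij : i < j) : G.Adj (f i) (f j) ↔ F.Adj i j :=
    (mk_mem_edgeRegion_iff_adj (hf i) (hf j)).symm.trans (hxF i j hij)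
  refine ⟨f, hmono, SimpleGraph.ext (funext₂ fun i j => propext ?_)⟩
  rw [SimpleGraph.comap_adj]
  rcases lt_trichotomy i j with hij | rfl | hij
  · exact hadj i j hij
  · simp only [SimpleGraph.irrefl]
  · rw [G.adj_comm, F.adj_comm, hadj j i hij]

lemma exists_mem_of_graphonEnt_lt {n : ℕ} (hn : 0 < n) (F : SimpleGraph (Fin n)) :
    ∃ η > 0, ∀ Q : GraphClass, IsOrderHereditary Q → ∀ W ∈ limitSet Q, 1 - η < graphonEnt W →
      F ∈ Q n := by
  obtain ⟨ε, hε, hcomap⟩ := exists_comap_eq_of_dCut_le hn F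
  refine ⟨(ε / 2) ^ 2, by positivity, fun Q hQ W ⟨hW, N, G, hG, hN, hlim⟩ hent => ?_⟩
  have hL1 : ∫ p, |W p.1 p.2 - 1 / 2| ∂squareVolume ≤ ε / 2 :=
    le_of_sq_le_sq (hW.sq_integral_abs_sub_half_le.trans (by linarith)) (by positivity)
  obtain ⟨k, hk, hNk⟩ := ((hlim.eventually_lt_const (half_pos hε)).and
    (hN.eventually_ge_atTop (2 * n))).exists
  obtain ⟨σ, hσ, hcut⟩ :=
    exists_isMPSelf_dCut_const_le (isGraphon_graphonOfGraph (G k)) hW (a := 1 / 2) hk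
  obtain ⟨f, hf, rfl⟩ := hcomap (G k) σ hNk hσ (by linarith)
  exact hQ _ _ f hf _ (hG k)

/-! ### Hadamard graphs -/

section CellVolume

open scoped Matrix

variable {N : ℕ}

/-- The measures of the traces of `S` on the `N` cells, through which the graphon of a graph on `N`
vertices sees `S`. -/
def cellVolume (N : ℕ) (S : Set ℝ) : Fin N → ℝ := fun i => unitVolume.real (S ∩ cell N i)

lemma cellVolume_nonneg (S : Set ℝ) (i : Fin N) : 0 ≤ cellVolume N S i := measureReal_nonneg

lemma cellVolume_le (S : Set ℝ) (i : Fin N) : cellVolume N S i ≤ 1 / N :=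
  (measureReal_mono inter_subset_right).trans_eq (measureReal_cell i.2)

lemma sum_cellVolume (hN : 0 < N) (S : Set ℝ) : ∑ i, cellVolume N S i = unitVolume.real S := by
  have hdisj : Pairwise (Function.onFun Disjoint fun i : Fin N => cell N i) := fun i j hij =>
    disjoint_left.2 fun _ hi hj => hij (Fin.ext (eq_of_mem_cell hN hi hj))
  have hae : unitVolume.restrict (Ioc 0 1) = unitVolume := by
    rw [Measure.restrict_restrict measurableSet_Ioc,
      inter_eq_self_of_subset_left Ioc_subset_Icc_self, restrict_Ioc_eq_restrict_Icc]
  calc ∑ i, cellVolume N S i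
      = ∑ i : Fin N, (unitVolume.restrict S).real (cell N i) :=
        Finset.sum_congr rfl fun i _ => by
          rw [cellVolume, measureReal_restrict_apply measurableSet_cell, inter_comm]
    _ = (unitVolume.restrict S).real (Ioc 0 1) := by
        rw [← iUnion_cell hN, measureReal_iUnion_fintype hdisj fun _ => measurableSet_cell]
    _ = unitVolume.real S := by
        rw [measureReal_restrict_apply measurableSet_Ioc, inter_comm,
          ← measureReal_restrict_apply' measurableSet_Ioc, hae]

lemma dotProduct_cellVolume_le (S T : Set ℝ) : cellVolume N S ⬝ᵥ cellVolume N T ≤ 1 / N :=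
  calc cellVolume N S ⬝ᵥ cellVolume N T ≤ ∑ _ : Fin N, (1 / N : ℝ) * (1 / N) :=
        Finset.sum_le_sum fun i _ => mul_le_mul (cellVolume_le S i) (cellVolume_le T i)
          (cellVolume_nonneg T i) (by positivity)
    _ = 1 / N := by
        rw [Finset.sum_const, Finset.card_univ, Fintype.card_fin, nsmul_eq_mul]
        field_simp

lemma measureReal_edgeRegion_inter_prod (G : SimpleGraph (Fin N)) [DecidableRel G.Adj]
    (S T : Set ℝ) :
    squareVolume.real (edgeRegion G ∩ S ×ˢ T) =
      cellVolume N S ⬝ᵥ G.adjMatrix ℝ *ᵥ cellVolume N T := by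
  let edges : Finset (Fin N × Fin N) := {e | G.Adj e.1 e.2}
  have hdisj : (edges : Set (Fin N × Fin N)).PairwiseDisjoint
      fun e => cell N e.1 ×ˢ cell N e.2 := by
    rintro ⟨i, j⟩ - ⟨i', j'⟩ - hne
    refine disjoint_left.2 fun p hp hp' => hne (Prod.ext (Fin.ext ?_) (Fin.ext ?_))
    · exact eq_of_mem_cell i.pos hp.1 hp'.1
    · exact eq_of_mem_cell i.pos hp.2 hp'.2
  have hcell : ∀ e : Fin N × Fin N, (squareVolume.restrict (S ×ˢ T)).real
      (cell N e.1 ×ˢ cell N e.2) = cellVolume N S e.1 * cellVolume N T e.2 := fun e => by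
    rw [measureReal_restrict_apply (measurableSet_cell.prod measurableSet_cell), prod_inter_prod,
      measureReal_prod_prod, inter_comm, inter_comm (cell N e.2)]
    rfl
  have hunion : edgeRegion G = ⋃ e ∈ edges, cell N e.1 ×ˢ cell N e.2 := by
    simp only [edgeRegion, edges, Finset.mem_filter_univ, mem_ofPred_eq]
  rw [← measureReal_restrict_apply measurableSet_edgeRegion, hunion,
    measureReal_biUnion_finset hdisj fun _ _ => measurableSet_cell.prod measurableSet_cell]
  simp only [hcell, edges, Finset.sum_filter, Fintype.sum_prod_type, dotProduct, Matrix.mulVec,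
    SimpleGraph.adjMatrix_apply, Finset.mul_sum, ite_mul, one_mul, zero_mul, mul_ite, mul_zero]

lemma dotProduct_diagonal_mulVec_cellVolume_mem_Icc {d : Fin N → ℝ}
    (hd : ∀ i, d i ∈ Icc (0 : ℝ) 1) (S T : Set ℝ) :
    cellVolume N S ⬝ᵥ Matrix.diagonal d *ᵥ cellVolume N T ∈ Icc (0 : ℝ) (1 / N) := by
  have hs : 0 ≤ cellVolume N S := cellVolume_nonneg S
  have ht := cellVolume_nonneg (N := N) T
  have hle : Matrix.diagonal d *ᵥ cellVolume N T ≤ cellVolume N T := fun i => by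
    rw [Matrix.mulVec_diagonal]
    exact mul_le_of_le_one_left (ht i) (hd i).2
  have hnonneg : 0 ≤ Matrix.diagonal d *ᵥ cellVolume N T := fun i => by
    rw [Matrix.mulVec_diagonal]
    exact mul_nonneg (hd i).1 (ht i)
  exact ⟨dotProduct_nonneg_of_nonneg hs hnonneg,
    (dotProduct_le_dotProduct_of_nonneg_left hle hs).trans (dotProduct_cellVolume_le S T)⟩

end CellVolume

section Hadamard

open scoped Matrix Kronecker

lemma sq_dotProduct_mulVec_le {n : Type*} [Fintype n] [DecidableEq n] {H : Matrix n n ℝ}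
    (hH : H.IsHadamard) (s t : n → ℝ) :
    (s ⬝ᵥ H *ᵥ t) ^ 2 ≤ Fintype.card n * (s ⬝ᵥ s) * (t ⬝ᵥ t) := by
  have hnorm : (H *ᵥ t) ⬝ᵥ (H *ᵥ t) = Fintype.card n * (t ⬝ᵥ t) := by
    rw [Matrix.dotProduct_mulVec, ← Matrix.mulVec_transpose, Matrix.mulVec_mulVec,
      ← Matrix.conjTranspose_eq_transpose_of_trivial, hH.conjTranspose_mul, Matrix.smul_mulVec,
      Matrix.one_mulVec, smul_dotProduct, smul_eq_mul]
  calc (s ⬝ᵥ H *ᵥ t) ^ 2 ≤ (s ⬝ᵥ s) * ((H *ᵥ t) ⬝ᵥ (H *ᵥ t)) := by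
        simpa only [dotProduct, sq] using Finset.sum_mul_sq_le_sq_mul_sq Finset.univ s (H *ᵥ t)
    _ = Fintype.card n * (s ⬝ᵥ s) * (t ⬝ᵥ t) := by rw [hnorm]; ring

lemma isHadamard_two : (!![1, 1; 1, -1] : Matrix (Fin 2) (Fin 2) ℝ).IsHadamard := by
  refine .of_mul_conjTranspose (fun i j => ?_) ?_ ?_
  · fin_cases i <;> fin_cases j <;> simp [Unitary.mem_iff]
  · ext i j
    fin_cases i <;> fin_cases j <;> norm_num [Matrix.mul_apply, Fin.sum_univ_two]
  · rw [Fintype.card_fin]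
    exact .of_ne_zero (by norm_num)

lemma isSymm_kronecker {m n α : Type*} [Mul α] {A : Matrix m m α} {B : Matrix n n α}
    (hA : A.IsSymm) (hB : B.IsSymm) : (A ⊗ₖ B).IsSymm :=
  .ext fun _ _ => congr_arg₂ (· * ·) (hA.apply _ _) (hB.apply _ _)

lemma exists_isHadamard_isSymm (k : ℕ) :
    ∃ H : Matrix (Fin (2 ^ k)) (Fin (2 ^ k)) ℝ, H.IsHadamard ∧ H.IsSymm := by
  induction k with
  | zero =>
    refine ⟨1, ⟨fun i j => ?_, ?_, ?_⟩, Matrix.isSymm_one⟩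
    · rw [Fin.ext (by lia : (i : ℕ) = j), Matrix.one_apply_eq]
      exact one_mem _
    · simp
    · simp
  | succ k ih =>
    obtain ⟨H, hH, hsymm⟩ := ih
    refine ⟨_, (hH.kronecker isHadamard_two).reindex finProdFinEquiv finProdFinEquiv, ?_⟩
    refine (isSymm_kronecker hsymm (.ext fun i j => ?_)).reindex _
    fin_cases i <;> fin_cases j <;> rfl

variable {N : ℕ} {H : Matrix (Fin N) (Fin N) ℝ}

/-- The graph joining two distinct vertices when the corresponding entry of the (symmetric)
`±1`-matrix `H` is `1`. -/
def signGraph (H : Matrix (Fin N) (Fin N) ℝ) : SimpleGraph (Fin N) :=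
  SimpleGraph.fromRel fun i j => H i j = 1

lemma adjMatrix_signGraph [DecidableRel (signGraph H).Adj]
    (hsign : ∀ i j, H i j = 1 ∨ H i j = -1) (hsymm : H.IsSymm) :
    (signGraph H).adjMatrix ℝ = (1 / 2 : ℝ) • H + (1 / 2 : ℝ) • Matrix.vecMulVec 1 1 -
      Matrix.diagonal fun i => (H i i + 1) / 2 := by
  ext i j
  rw [SimpleGraph.adjMatrix_apply]
  obtain rfl | hij := eq_or_ne i j
  · simp
    ring
  · have hadj : (signGraph H).Adj i j ↔ H i j = 1 := by
      rw [signGraph, SimpleGraph.fromRel_adj, hsymm.apply, or_self, and_iff_right hij]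
    rcases hsign i j with h | h <;>
      norm_num [hadj, h, hij, Matrix.vecMulVec_apply]

lemma abs_dotProduct_mulVec_cellVolume_le (hH : H.IsHadamard) (S T : Set ℝ) :
    |cellVolume N S ⬝ᵥ H *ᵥ cellVolume N T| ≤ 1 / √N := by
  rw [one_div, ← Real.sqrt_inv, ← one_div]
  refine Real.abs_le_sqrt ((sq_dotProduct_mulVec_le hH _ _).trans ?_)
  calc Fintype.card (Fin N) * (cellVolume N S ⬝ᵥ cellVolume N S) *
        (cellVolume N T ⬝ᵥ cellVolume N T) ≤ N * (1 / N) * (1 / N) := by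
        rw [Fintype.card_fin]
        gcongr
        · exact dotProduct_nonneg_of_nonneg (cellVolume_nonneg T) (cellVolume_nonneg T)
        · exact dotProduct_cellVolume_le S S
        · exact dotProduct_cellVolume_le T T
    _ = 1 / N := by field_simp

lemma dCut_signGraph_half_le (hH : H.IsHadamard) (hsymm : H.IsSymm) (hN : 0 < N) :
    dCut (graphonOfGraph (signGraph H)) (fun _ _ => 1 / 2) ≤ 1 / √N / 2 + 1 / N := by
  classical
  have hint : Integrable ((edgeRegion (signGraph H)).indicator (1 : ℝ × ℝ → ℝ)) squareVolume :=
    (integrable_const 1).indicator measurableSet_edgeRegion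
  simp only [dCut, graphonOfGraph_eq_indicator]
  refine (cutNorm_le_iff (hint.sub (integrable_const _))).2 fun S T _ _ => ?_
  have hsign : ∀ i j, H i j = 1 ∨ H i j = -1 := fun i j =>
    Unitary.mem_iff_eq_one_or_eq_neg_one.1 (hH.apply_mem i j)
  let d (i : Fin N) : ℝ := (H i i + 1) / 2
  have hd : ∀ i, d i ∈ Icc (0 : ℝ) 1 := fun i => by
    rcases hsign i i with h | h <;> norm_num [d, h]
  have hdisc : ∫ p in S ×ˢ T, ((edgeRegion (signGraph H)).indicator 1 p - 1 / 2) ∂squareVolume =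
      (cellVolume N S ⬝ᵥ H *ᵥ cellVolume N T) / 2 -
        cellVolume N S ⬝ᵥ Matrix.diagonal d *ᵥ cellVolume N T := by
    rw [setIntegral_indicator_one_sub_const measurableSet_edgeRegion,
      measureReal_edgeRegion_inter_prod, adjMatrix_signGraph hsign hsymm, Matrix.sub_mulVec,
      Matrix.add_mulVec, Matrix.smul_mulVec, Matrix.smul_mulVec, Matrix.vecMulVec_mulVec,
      dotProduct_sub, dotProduct_add, dotProduct_smul, dotProduct_smul, ← sum_cellVolume hN S,
      ← sum_cellVolume hN T]
    simp only [one_div, smul_eq_mul, one_dotProduct, Finset.op_sum, dotProduct_smul, dotProduct_one,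
      MulOpposite.smul_eq_mul_unop, Finset.unop_sum, MulOpposite.unop_op, d]
    ring
  obtain ⟨hdiag₀, hdiag⟩ := dotProduct_diagonal_mulVec_cellVolume_mem_Icc hd S T
  rw [hdisc]
  refine (abs_sub _ _).trans ?_
  rw [abs_div, abs_two, abs_of_nonneg hdiag₀]
  gcongr
  exact abs_dotProduct_mulVec_cellVolume_le hH S T

end Hadamard

lemma const_half_mem_limitSet {Q : GraphClass} (hQ : ∀ n, 1 ≤ n → Q n = univ) :
    (fun _ _ => 1 / 2) ∈ limitSet Q := by
  choose H hH hsymm using exists_isHadamard_isSymm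
  have hpow : Tendsto (fun k : ℕ => 2 ^ k) atTop atTop :=
    tendsto_pow_atTop_atTop_of_one_lt one_lt_two
  have hcast : Tendsto (fun k : ℕ => ((2 ^ k : ℕ) : ℝ)) atTop atTop :=
    tendsto_natCast_atTop_atTop.comp hpow
  have hbound : Tendsto (fun k : ℕ => 1 / √(2 ^ k : ℕ) / 2 + 1 / ((2 ^ k : ℕ) : ℝ)) atTop
      (nhds 0) := by
    have hone : Tendsto (fun _ : ℕ => (1 : ℝ)) atTop (nhds 1) := tendsto_const_nhds
    simpa using ((hone.div_atTop (Real.tendsto_sqrt_atTop.comp hcast)).div_const 2).add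
      (hone.div_atTop hcast)
  refine ⟨isGraphon_const (by norm_num), fun k => 2 ^ k, fun k => signGraph (H k), fun k => ?_,
    hpow, squeeze_zero (fun k => deltaCut_nonneg _ _) (fun k => (deltaCut_le_dCut _ _).trans
      (dCut_signGraph_half_le (hH k) (hsymm k) (by positivity))) hbound⟩
  rw [hQ _ Nat.one_le_two_pow]
  exact mem_univ _

theorem stmt18_general (Q : GraphClass) (hQ : IsOrderHereditary Q) (hne : (limitSet Q).Nonempty) :
    (sSup (graphonEnt '' limitSet Q) = 0 ↔ ∀ W ∈ limitSet Q, IsRandomFree W) ∧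
      (sSup (graphonEnt '' limitSet Q) = 1 ↔
        ∀ n : ℕ, 1 ≤ n → Q n = (Set.univ : Set (SimpleGraph (Fin n)))) := by
  refine ⟨sSup_image_graphonEnt_eq_zero_iff fun W hW => hW.1,
    fun h n hn => eq_univ_of_forall fun F => ?_, fun h => ?_⟩
  · obtain ⟨η, hη, hmem⟩ := exists_mem_of_graphonEnt_lt hn F
    obtain ⟨_, ⟨W, hW, rfl⟩, hent⟩ :=
      exists_lt_of_lt_csSup (hne.image graphonEnt) (show 1 - η < _ by linarith)
    exact hmem Q hQ W hW hent
  · have hle : ∀ e ∈ graphonEnt '' limitSet Q, e ≤ 1 :=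
      forall_mem_image.2 fun W hW => hW.1.graphonEnt_le_one
    exact (csSup_le (hne.image _) hle).antisymm
      (le_csSup ⟨1, hle⟩ ⟨_, const_half_mem_limitSet h, graphonEnt_const_half⟩)

/-- part of Theorem 1.6: for a hereditary class `Q`, the maximal
entropy over `Q̂` is `0` iff `Q` is random-free, and `1` iff `Q` is the class of all
graphs. -/
theorem stmt18 (Q : GraphClass) (hQ : IsHereditary Q) (hne : (limitSet Q).Nonempty) :
    (sSup (graphonEnt '' limitSet Q) = 0 ↔ ∀ W ∈ limitSet Q, IsRandomFree W) ∧
      (sSup (graphonEnt '' limitSet Q) = 1 ↔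
        ∀ n : ℕ, 1 ≤ n → Q n = (Set.univ : Set (SimpleGraph (Fin n)))) :=
  stmt18_general Q hQ.2 hne

end
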